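/- arXiv:2501.13930 — 2 statements merged into one kernel-verified Lean document; each statement's English description precedes it below -/
import Mathlib

section
/- The sector dimensions of the spin-1 breakdown model satisfy the recurrence relation: for every L ≥ 1, if Q ≥ 1 is odd then N_{L+1}(Q) = N_L((Q−1)/2), and if Q ≥ 2 is even then N_{L+1}(Q) = N_L(Q/2) + N_L(Q/2 − 1). -/
/-!
Separating the lowest site gives `Q(n) = n₀ + 2 Q(m)`, where `m` is `n` shifted by one site.
Hence `N_{L+1}(Q)` is the sum over `a ∈ {0, 1, 2}` of the number of `m` with `a + 2 Q(m) = Q`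
(`sectorDim_succ`). The parity of `Q` decides which terms survive: only `a = 1` for odd `Q`,
and `a = 0, 2` for even `Q`.
-/

/-- The charge of a spin-1 breakdown configuration `n : Fin L → Fin 3`
(sites indexed `0, …, L-1`, so the site at index `i` carries weight `2^i`). -/
def breakdownCharge (L : ℕ) (n : Fin L → Fin 3) : ℕ :=
  ∑ i : Fin L, 2 ^ (i : ℕ) * (n i : ℕ)

/-- `sectorDim L Q` is the number of length-`L` configurations with charge `Q`,
i.e. the dimension of the Krylov sector `K_Q` of the spin-1 breakdown model. -/
def sectorDim (L Q : ℕ) : ℕ :=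
  (Finset.univ.filter fun n : Fin L → Fin 3 => breakdownCharge L n = Q).card

theorem breakdownCharge_cons (L : ℕ) (a : Fin 3) (n : Fin L → Fin 3) :
    breakdownCharge (L + 1) (Fin.cons a n) = a + 2 * breakdownCharge L n := by
  simp [breakdownCharge, Fin.sum_univ_succ, Finset.mul_sum, pow_succ']
  exact Finset.sum_congr rfl fun i _ => mul_assoc _ _ _

theorem sectorDim_succ (L Q : ℕ) :
    sectorDim (L + 1) Q = ∑ a : Fin 3, (Finset.univ.filter fun n : Fin L → Fin 3 =>
      (a : ℕ) + 2 * breakdownCharge L n = Q).card := by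
  simp only [sectorDim, Finset.card_filter]
  rw [← (Fin.consEquiv fun _ : Fin (L + 1) => Fin 3).sum_comp, Fintype.sum_prod_type]
  simp [Fin.consEquiv, breakdownCharge_cons]

/-- The recurrence relation for the Krylov sector dimensions of the spin-1
breakdown model: for `L ≥ 1`, if `Q ≥ 1` is odd then `N_{L+1}(Q) = N_L((Q-1)/2)`,
and if `Q ≥ 2` is even then `N_{L+1}(Q) = N_L(Q/2) + N_L(Q/2 - 1)`. -/
theorem sectorDim_recurrence (L Q : ℕ) (hL : 1 ≤ L) :
    (Odd Q → 1 ≤ Q → sectorDim (L + 1) Q = sectorDim L ((Q - 1) / 2)) ∧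
    (Even Q → 2 ≤ Q →
      sectorDim (L + 1) Q = sectorDim L (Q / 2) + sectorDim L (Q / 2 - 1)) := by
  constructor
  · rintro ⟨k, rfl⟩ -
    have h0 (m : ℕ) : ¬ 2 * m = 2 * k + 1 := by omega
    have h1 (m : ℕ) : 1 + 2 * m = 2 * k + 1 ↔ m = k := by omega
    have h2 (m : ℕ) : ¬ 2 + 2 * m = 2 * k + 1 := by omega
    rw [sectorDim_succ, Fin.sum_univ_three]
    simp [h0, h1, h2, sectorDim]
  · rintro ⟨k, rfl⟩ hQ
    have h0 (m : ℕ) : 2 * m = k + k ↔ m = k := by omega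
    have h1 (m : ℕ) : ¬ 1 + 2 * m = k + k := by omega
    -- `2 ≤ Q` makes the truncated subtraction `k - 1` exact.
    have h2 (m : ℕ) : 2 + 2 * m = k + k ↔ m = k - 1 := by omega
    have hk : (k + k) / 2 = k := by omega
    rw [sectorDim_succ, Fin.sum_univ_three]
    simp [h0, h1, h2, hk, sectorDim]
end

section
/- In the spin-1 breakdown model, each even-charge sector is at least as large as its adjacent odd-charge sectors: for every L ≥ 1 and every odd Q ≥ 1, N_L(Q) ≤ N_L(Q+1) and N_L(Q) ≤ N_L(Q−1). -/
theorem breakdownCharge_succ (m : ℕ) (n : Fin (m + 1) → Fin 3) :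
    breakdownCharge (m + 1) n = (n 0 : ℕ) + 2 * breakdownCharge m (fun i => n i.succ) := by
  unfold breakdownCharge
  rw [Fin.sum_univ_succ, Finset.mul_sum]
  simp [pow_succ', mul_assoc]

theorem lowest_eq_one_of_odd_charge {m : ℕ} {n : Fin (m + 1) → Fin 3}
    (h : Odd (breakdownCharge (m + 1) n)) : n 0 = 1 := by
  rw [breakdownCharge_succ] at h
  obtain ⟨k, hk⟩ := h
  have := (n 0).isLt
  apply Fin.ext
  simp only [Fin.val_one]
  omega

/-- Overwriting the lowest site by `a` injects the sector of odd charge `Q` into the sector of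
charge `R = Q - 1 + a`. -/
theorem sectorDim_odd_le (m Q R : ℕ) (hQ : Odd Q) (a : Fin 3) (hR : R + 1 = Q + a) :
    sectorDim (m + 1) Q ≤ sectorDim (m + 1) R := by
  unfold sectorDim
  apply Finset.card_le_card_of_injOn (fun n => Function.update n 0 a)
  · intro n hn
    simp only [Finset.coe_filter, Finset.mem_univ, true_and, Set.mem_ofPred_eq] at hn ⊢
    have h1 := lowest_eq_one_of_odd_charge (hn ▸ hQ)
    rw [breakdownCharge_succ] at hn ⊢
    simp only [h1, Fin.val_one, Function.update_self, ne_eq, Fin.succ_ne_zero,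
      not_false_eq_true, Function.update_of_ne] at hn ⊢
    omega
  · intro n hn n' hn' h
    simp only [Finset.coe_filter, Finset.mem_univ, true_and, Set.mem_ofPred_eq] at hn hn'
    have h1 := lowest_eq_one_of_odd_charge (hn ▸ hQ)
    have h1' := lowest_eq_one_of_odd_charge (hn' ▸ hQ)
    funext i
    by_cases hi : i = 0
    · rw [hi, h1, h1']
    · simpa [hi] using congrFun h i

/-- In the spin-1 breakdown model, each even-charge sector is at least as large as
its adjacent odd-charge sectors: for every `L ≥ 1` and every odd `Q ≥ 1`,
`N_L(Q) ≤ N_L(Q+1)` and `N_L(Q) ≤ N_L(Q-1)`. -/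
theorem sectorDim_even_dominates_odd (L Q : ℕ) (hL : 1 ≤ L) (hQodd : Odd Q)
    (hQ : 1 ≤ Q) :
    sectorDim L Q ≤ sectorDim L (Q + 1) ∧ sectorDim L Q ≤ sectorDim L (Q - 1) := by
  obtain ⟨m, rfl⟩ : ∃ m, L = m + 1 := ⟨L - 1, by omega⟩
  exact ⟨sectorDim_odd_le m Q (Q + 1) hQodd 2 rfl,
    sectorDim_odd_le m Q (Q - 1) hQodd 0 (by simp only [Fin.val_zero]; omega)⟩
end
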